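/- Separation theorem, converse part under the source strong converse property (Theorem 6.5, part 2, source version, spectral form). Let V = {Vⁿ} be a general source satisfying H̄(V) = H_(V), and let W = {Wⁿ} be a general channel. If V is transmissible over W, then H̄(V) ≤ sup_X I_(X;Y), where the supremum is over all channel inputs X = {Xⁿ} and Yⁿ is the channel output of Wⁿ on input Xⁿ. -/

import Mathlib

open Filter Real Topology

namespace ISC

/-- Words of length `n` over alphabet `A`. -/
abbrev Word (A : Type*) (n : ℕ) : Type _ := Fin n → A

/-- `p` is a probability mass function. -/
def IsPMF {α : Type*} (p : α → ℝ) : Prop :=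
  (∀ a, 0 ≤ p a) ∧ HasSum p 1

/-- Probability of the event `S` under the pmf `p`. -/
noncomputable def prob {α : Type*} (p : α → ℝ) (S : Set α) : ℝ :=
  ∑' a, S.indicator p a

/-- Output marginal `P_{Yⁿ}` of the channel `W` fed with the joint input law `P_{VⁿXⁿ}`. -/
noncomputable def outDist {𝒱 𝒳 𝒴 : Type*} {n : ℕ}
    (PVX : Word 𝒱 n × Word 𝒳 n → ℝ) (W : Word 𝒳 n → Word 𝒴 n → ℝ)
    (y : Word 𝒴 n) : ℝ :=
  ∑' vx : Word 𝒱 n × Word 𝒳 n, PVX vx * W vx.2 y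

/-- Joint law of `(Vⁿ, Xⁿ, Yⁿ)`: `P_{VⁿXⁿ}(v,x) · Wⁿ(y|x)`. -/
noncomputable def jointLaw {𝒱 𝒳 𝒴 : Type*} {n : ℕ}
    (PVX : Word 𝒱 n × Word 𝒳 n → ℝ) (W : Word 𝒳 n → Word 𝒴 n → ℝ) :
    Word 𝒱 n × Word 𝒳 n × Word 𝒴 n → ℝ :=
  fun z => PVX (z.1, z.2.1) * W z.2.1 z.2.2

/-- The joint input law `P_{VⁿXⁿ}` induced by the deterministic encoder `φ`:
`P_{Vⁿ}(v) 1{x = φ(v)}`. -/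
noncomputable def codeInput {𝒱 𝒳 : Type*} [DecidableEq 𝒳] {n : ℕ} (PV : Word 𝒱 n → ℝ)
    (φ : Word 𝒱 n → Word 𝒳 n) : Word 𝒱 n × Word 𝒳 n → ℝ :=
  fun vx => if vx.2 = φ vx.1 then PV vx.1 else 0

/-- Error probability `εₙ` of the joint source-channel code `(φ, ψ)`. -/
noncomputable def errProb {𝒱 𝒳 𝒴 : Type*} {n : ℕ}
    (PV : Word 𝒱 n → ℝ) (W : Word 𝒳 n → Word 𝒴 n → ℝ)
    (φ : Word 𝒱 n → Word 𝒳 n) (ψ : Word 𝒴 n → Word 𝒱 n) : ℝ :=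
  ∑' v, PV v * prob (W (φ v)) {y | ψ y ≠ v}

/-- `V` is transmissible over `W`. -/
def Transmissible {𝒱 𝒳 𝒴 : Type*} (PV : (n : ℕ) → Word 𝒱 n → ℝ)
    (W : (n : ℕ) → Word 𝒳 n → Word 𝒴 n → ℝ) : Prop :=
  ∃ (φ : (n : ℕ) → Word 𝒱 n → Word 𝒳 n) (ψ : (n : ℕ) → Word 𝒴 n → Word 𝒱 n),
    Tendsto (fun n => errProb (PV n) (W n) (φ n) (ψ n)) atTop (nhds 0)

/-- Output marginal of the channel `W` for an input distribution `P_{Xⁿ}`. -/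
noncomputable def outDistX {𝒳 𝒴 : Type*} {n : ℕ}
    (PX : Word 𝒳 n → ℝ) (W : Word 𝒳 n → Word 𝒴 n → ℝ) (y : Word 𝒴 n) : ℝ :=
  ∑' x : Word 𝒳 n, PX x * W x y

/-- Joint law of `(Xⁿ, Yⁿ)`: `P_{Xⁿ}(x) · Wⁿ(y|x)`. -/
noncomputable def jointXY {𝒳 𝒴 : Type*} {n : ℕ}
    (PX : Word 𝒳 n → ℝ) (W : Word 𝒳 n → Word 𝒴 n → ℝ) :
    Word 𝒳 n × Word 𝒴 n → ℝ :=
  fun z => PX z.1 * W z.1 z.2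

/-- Limit superior in probability of a sequence of random variables `Z i`
distributed according to the pmfs `p i`. -/
noncomputable def plimsup {α : ℕ → Type*} (p : (i : ℕ) → α i → ℝ)
    (Z : (i : ℕ) → α i → ℝ) : EReal :=
  sInf {β : EReal |
    Tendsto (fun i => prob (p i) {a | β < (Z i a : EReal)}) atTop (nhds 0)}

/-- Limit inferior in probability of a sequence of random variables `Z i`
distributed according to the pmfs `p i`. -/
noncomputable def pliminf {α : ℕ → Type*} (p : (i : ℕ) → α i → ℝ)
    (Z : (i : ℕ) → α i → ℝ) : EReal :=
  sSup {β : EReal |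
    Tendsto (fun i => prob (p i) {a | (Z i a : EReal) < β}) atTop (nhds 0)}

/-- Spectral sup-entropy rate `H̄(V)`. -/
noncomputable def Hbar {𝒱 : Type*} (PV : (n : ℕ) → Word 𝒱 n → ℝ) : EReal :=
  plimsup (fun n => PV n) (fun n v => (1 / (n : ℝ)) * Real.log (1 / PV n v))

/-- Spectral inf-entropy rate `H_(V)`. -/
noncomputable def Hlow {𝒱 : Type*} (PV : (n : ℕ) → Word 𝒱 n → ℝ) : EReal :=
  pliminf (fun n => PV n) (fun n v => (1 / (n : ℝ)) * Real.log (1 / PV n v))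

/-- Spectral inf-information rate `I_(X;Y)` of the channel `W` with input `X`. -/
noncomputable def Ilow {𝒳 𝒴 : Type*} (PX : (n : ℕ) → Word 𝒳 n → ℝ)
    (W : (n : ℕ) → Word 𝒳 n → Word 𝒴 n → ℝ) : EReal :=
  pliminf (fun n => jointXY (PX n) (W n))
    (fun n z => (1 / (n : ℝ)) * Real.log (W n z.1 z.2 / outDistX (PX n) (W n) z.2))

/-- Spectral sup-information rate `Ī(X;Y)` of the channel `W` with input `X`. -/
noncomputable def Ihigh {𝒳 𝒴 : Type*} (PX : (n : ℕ) → Word 𝒳 n → ℝ)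
    (W : (n : ℕ) → Word 𝒳 n → Word 𝒴 n → ℝ) : EReal :=
  plimsup (fun n => jointXY (PX n) (W n))
    (fun n z => (1 / (n : ℝ)) * Real.log (W n z.1 z.2 / outDistX (PX n) (W n) z.2))

/-- `sup_X I_(X;Y)`: the supremum over all channel inputs. -/
noncomputable def supIlow {𝒳 𝒴 : Type*}
    (W : (n : ℕ) → Word 𝒳 n → Word 𝒴 n → ℝ) : EReal :=
  ⨆ PX : {PX : (n : ℕ) → Word 𝒳 n → ℝ // ∀ n, IsPMF (PX n)}, Ilow PX.1 W


/-- Push-forward of a mass function. -/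
noncomputable def push {A B : Type} (φ : A → B) (P : A → ℝ) (x : B) : ℝ :=
  prob P {v | φ v = x}

lemma prob_ofReal {A : Type} {p : A → ℝ} (h0 : ∀ a, 0 ≤ p a) (hs : Summable p) (S : Set A) :
    ENNReal.ofReal (prob p S) = ∑' a, S.indicator (fun a => ENNReal.ofReal (p a)) a := by
  classical
  unfold prob
  rw [ENNReal.ofReal_tsum_of_nonneg (fun a => Set.indicator_nonneg (fun a _ => h0 a) a)
    (hs.indicator S)]
  refine tsum_congr fun a => ?_
  by_cases h : a ∈ S <;> simp [h]

lemma prob_nonneg {A : Type} {p : A → ℝ} (h0 : ∀ a, 0 ≤ p a) (S : Set A) : 0 ≤ prob p S :=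
  tsum_nonneg fun a => Set.indicator_nonneg (fun a _ => h0 a) a

lemma prob_mono {A : Type} {p : A → ℝ} (h : IsPMF p) {S T : Set A} (hST : S ⊆ T) :
    prob p S ≤ prob p T :=
  Summable.tsum_le_tsum (fun a => Set.indicator_le_indicator_of_subset hST h.1 a)
    (h.2.summable.indicator S) (h.2.summable.indicator T)

lemma prob_le_one {A : Type} {p : A → ℝ} (h : IsPMF p) (S : Set A) : prob p S ≤ 1 := by
  have := prob_mono h (Set.subset_univ S)
  simpa [prob, h.2.tsum_eq] using this

lemma pmf_iff {A : Type} {p : A → ℝ} (h0 : ∀ a, 0 ≤ p a) :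
    IsPMF p ↔ ∑' a, ENNReal.ofReal (p a) = 1 := by
  constructor
  · intro h
    rw [← ENNReal.ofReal_tsum_of_nonneg h0 h.2.summable, h.2.tsum_eq, ENNReal.ofReal_one]
  · intro h
    refine ⟨h0, ?_⟩
    have := ENNReal.hasSum_toReal (f := fun a => ENNReal.ofReal (p a)) (by rw [h]; simp)
    rw [← ENNReal.tsum_toReal_eq (by simp), h] at this
    simpa [ENNReal.toReal_ofReal (h0 _)] using this

lemma push_nonneg {A B : Type} (φ : A → B) {P : A → ℝ} (hP : IsPMF P) (x : B) :
    0 ≤ push φ P x := prob_nonneg hP.1 _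

/-- Change of variables. -/
lemma push_sum {A B : Type} (φ : A → B) {P : A → ℝ} (hP : IsPMF P) (f : B → ENNReal) :
    ∑' x, ENNReal.ofReal (push φ P x) * f x = ∑' v, ENNReal.ofReal (P v) * f (φ v) := by
  classical
  simp_rw [push, prob_ofReal hP.1 hP.2.summable, ← ENNReal.tsum_mul_right]
  rw [ENNReal.tsum_comm]
  refine tsum_congr fun v => ?_
  rw [tsum_eq_single (φ v)]
  · simp
  · intro x hx
    simp [Set.indicator, hx.symm]

lemma push_pmf {A B : Type} (φ : A → B) {P : A → ℝ} (hP : IsPMF P) : IsPMF (push φ P) := by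
  rw [pmf_iff (push_nonneg φ hP)]
  have := push_sum φ hP (fun _ => 1)
  simpa [(pmf_iff hP.1).1 hP] using this

lemma joint_pmf {B C : Type} {p : B → ℝ} (hp : IsPMF p) {W : B → C → ℝ}
    (hW : ∀ x, IsPMF (W x)) : IsPMF (fun z : B × C => p z.1 * W z.1 z.2) := by
  rw [pmf_iff (fun z => mul_nonneg (hp.1 _) ((hW _).1 _)), ENNReal.tsum_prod']
  simp_rw [ENNReal.ofReal_mul (hp.1 _), ENNReal.tsum_mul_left,
    (pmf_iff (hW _).1).1 (hW _), mul_one]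
  exact (pmf_iff hp.1).1 hp

lemma W_le_one {C : Type} {w : C → ℝ} (h : IsPMF w) (y : C) : w y ≤ 1 := by
  have := h.2.summable.le_tsum y (fun j _ => h.1 j)
  rwa [h.2.tsum_eq] at this

lemma out_summable {B C : Type} {p : B → ℝ} (hp : IsPMF p) {W : B → C → ℝ}
    (hW : ∀ x, IsPMF (W x)) (y : C) : Summable fun x => p x * W x y :=
  Summable.of_nonneg_of_le (fun x => mul_nonneg (hp.1 _) ((hW _).1 _))
    (fun x => mul_le_of_le_one_right (hp.1 _) (W_le_one (hW x) y)) hp.2.summable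

lemma out_pmf {B C : Type} {p : B → ℝ} (hp : IsPMF p) {W : B → C → ℝ}
    (hW : ∀ x, IsPMF (W x)) : IsPMF (fun y => ∑' x, p x * W x y) := by
  have h0 : ∀ x y, 0 ≤ p x * W x y := fun x y => mul_nonneg (hp.1 _) ((hW _).1 _)
  rw [pmf_iff (fun y => tsum_nonneg fun x => h0 x y)]
  simp_rw [fun y => ENNReal.ofReal_tsum_of_nonneg (fun x => h0 x y) (out_summable hp hW y)]
  rw [ENNReal.tsum_comm]
  simp_rw [ENNReal.ofReal_mul (hp.1 _), ENNReal.tsum_mul_left,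
    (pmf_iff (hW _).1).1 (hW _), mul_one]
  exact (pmf_iff hp.1).1 hp

lemma one_shot {A B C : Type} {P : A → ℝ} (hP : IsPMF P) {W : B → C → ℝ}
    (hW : ∀ x, IsPMF (W x)) (φ : A → B) (ψ : C → A) (n : ℝ) (hn : 0 < n) (c d : ℝ) :
    prob (fun z : B × C => push φ P z.1 * W z.1 z.2)
      {z | (1 / n) * Real.log (W z.1 z.2 / ∑' x, push φ P x * W x z.2) < c} ≤
    prob P {v | (1 / n) * Real.log (1 / P v) < d} +
      (∑' v, P v * prob (W (φ v)) {y | ψ y ≠ v}) + Real.exp (-(n * (d - c))) := by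
  classical
  have hq := push_pmf φ hP
  have hJ := joint_pmf hq hW
  have hO := out_pmf hq hW
  set Q : C → ℝ := fun y => ∑' x, push φ P x * W x y with hQ
  set S : Set (B × C) := {z | (1 / n) * Real.log (W z.1 z.2 / Q z.2) < c} with hS
  set T : Set A := {v | (1 / n) * Real.log (1 / P v) < d} with hT
  have herr0 : ∀ v, 0 ≤ P v * prob (W (φ v)) {y | ψ y ≠ v} := fun v =>
    mul_nonneg (hP.1 v) (prob_nonneg (hW _).1 _)
  have herrs : Summable fun v => P v * prob (W (φ v)) {y | ψ y ≠ v} :=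
    Summable.of_nonneg_of_le herr0
      (fun v => mul_le_of_le_one_right (hP.1 _) (prob_le_one (hW _) _)) hP.2.summable
  have hE0 : 0 ≤ ∑' v, P v * prob (W (φ v)) {y | ψ y ≠ v} := tsum_nonneg herr0
  have hT0 := prob_nonneg hP.1 T
  rw [← ENNReal.ofReal_le_ofReal_iff (by positivity),
    ENNReal.ofReal_add (by positivity) (by positivity), ENNReal.ofReal_add hT0 hE0,
    prob_ofReal hJ.1 hJ.2.summable, prob_ofReal hP.1 hP.2.summable,
    ENNReal.ofReal_tsum_of_nonneg herr0 herrs, ENNReal.tsum_prod']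
  -- pointwise bound
  have key : ∀ v y, (φ v, y) ∈ S → v ∉ T → P v * W (φ v) y ≤
      Real.exp (-(n * (d - c))) * Q y := by
    intro v y h1 h2
    have hw := (hW (φ v)).1 y
    have hp := hP.1 v
    rcases hw.eq_or_lt with hw | hw
    · rw [← hw, mul_zero]; exact mul_nonneg (Real.exp_pos _).le (hO.1 y)
    rcases hp.eq_or_lt with hp | hp
    · rw [← hp, zero_mul]; exact mul_nonneg (Real.exp_pos _).le (hO.1 y)
    have hle : P v ≤ push φ P (φ v) := by
      have := (hP.2.summable.indicator {a | φ a = φ v}).le_tsum v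
        (fun j _ => Set.indicator_nonneg (fun a _ => hP.1 a) j)
      simpa [push, prob] using this
    have hQpos : 0 < Q y := by
      have := (out_summable hq hW y).le_tsum (φ v)
        (fun j _ => mul_nonneg (hq.1 _) ((hW _).1 _))
      refine lt_of_lt_of_le ?_ this
      exact mul_pos (hp.trans_le hle) hw
    simp only [hS, hT, Set.mem_setOf_eq, not_lt, one_div, inv_mul_eq_div] at h1 h2
    rw [div_lt_iff₀ hn, Real.log_div hw.ne' hQpos.ne'] at h1
    rw [le_div_iff₀ hn, Real.log_inv] at h2
    rw [← Real.log_le_log_iff (by positivity) (by positivity),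
      Real.log_mul hp.ne' hw.ne', Real.log_mul (Real.exp_pos _).ne' hQpos.ne', Real.log_exp]
    nlinarith
  have e1 : ∑' x, ∑' y, S.indicator (fun z : B × C =>
        ENNReal.ofReal (push φ P z.1 * W z.1 z.2)) (x, y) =
      ∑' v, ∑' y, if (φ v, y) ∈ S then ENNReal.ofReal (P v * W (φ v) y) else 0 := by
    have := push_sum φ hP (fun x => ∑' y, if (x, y) ∈ S then ENNReal.ofReal (W x y) else 0)
    simp only [← ENNReal.tsum_mul_left, mul_ite, mul_zero, ← ENNReal.ofReal_mul (hP.1 _),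
      ← ENNReal.ofReal_mul (hq.1 _)] at this
    rw [← this]
    simp [Set.indicator]
  rw [e1]
  have e2 : ∀ v, T.indicator (fun a => ENNReal.ofReal (P a)) v =
      ∑' y, if v ∈ T then ENNReal.ofReal (P v * W (φ v) y) else 0 := by
    intro v
    by_cases h : v ∈ T
    · simp [h, ENNReal.ofReal_mul (hP.1 _), ENNReal.tsum_mul_left,
        (pmf_iff (hW _).1).1 (hW _)]
    · simp [h]
  have e3 : ∀ v, ENNReal.ofReal (P v * prob (W (φ v)) {y | ψ y ≠ v}) =
      ∑' y, if ψ y ≠ v then ENNReal.ofReal (P v * W (φ v) y) else 0 := by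
    intro v
    rw [ENNReal.ofReal_mul (hP.1 _), prob_ofReal (hW _).1 (hW _).2.summable,
      ← ENNReal.tsum_mul_left]
    refine tsum_congr fun y => ?_
    simp [Set.indicator, ENNReal.ofReal_mul (hP.1 _)]
  have e4 : ENNReal.ofReal (Real.exp (-(n * (d - c)))) =
      ∑' v, ∑' y, if ψ y = v then ENNReal.ofReal (Real.exp (-(n * (d - c))) * Q y) else 0 := by
    rw [ENNReal.tsum_comm]
    have e5 : ∀ y, (∑' v, if ψ y = v then
        ENNReal.ofReal (Real.exp (-(n * (d - c))) * Q y) else 0) =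
        ENNReal.ofReal (Real.exp (-(n * (d - c)))) * ENNReal.ofReal (Q y) := by
      intro y
      rw [tsum_eq_single (ψ y) (fun v hv => if_neg hv.symm), if_pos rfl,
        ENNReal.ofReal_mul (Real.exp_pos _).le]
    simp_rw [e5, ENNReal.tsum_mul_left]
    rw [(pmf_iff hO.1).1 hO, mul_one]
  rw [e4]
  simp_rw [e2, e3, ← ENNReal.tsum_add]
  refine ENNReal.tsum_le_tsum fun v => ENNReal.tsum_le_tsum fun y => ?_
  by_cases h1 : (φ v, y) ∈ S
  · by_cases h2 : v ∈ T
    · simp only [h1, h2, if_true]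
      rw [add_assoc]; exact le_self_add
    · by_cases h3 : ψ y = v
      · simp only [h1, h2, h3, if_true, if_false, ne_eq, not_true, zero_add]
        exact ENNReal.ofReal_le_ofReal (key v y h1 h2)
      · simp [h1, h2, h3]
  · simp [h1]

/-- **Separation theorem, converse part under the source strong converse property**
(Theorem 6.5, part 2, source version, spectral form). -/
theorem separation_converse_source_strong_converse
    {𝒱 𝒳 𝒴 : Type} [Countable 𝒱] [Countable 𝒳] [Countable 𝒴]
    (PV : (n : ℕ) → Word 𝒱 n → ℝ) (hPV : ∀ n, IsPMF (PV n))
    (W : (n : ℕ) → Word 𝒳 n → Word 𝒴 n → ℝ) (hW : ∀ n x, IsPMF (W n x))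
    (hsc : Hbar PV = Hlow PV)
    (htrans : Transmissible PV W) :
    Hbar PV ≤ supIlow W := by
  obtain ⟨φ, ψ, hε⟩ := htrans
  rw [hsc]
  refine le_of_forall_lt fun a ha => ?_
  obtain ⟨β, hβ, haβ⟩ := lt_sSup_iff.1 ha
  obtain ⟨c, hac, hcβ⟩ := EReal.lt_iff_exists_real_btwn.1 haβ
  obtain ⟨d, hcd, hdβ⟩ := EReal.lt_iff_exists_real_btwn.1 hcβ
  have hcd' : c < d := EReal.coe_lt_coe_iff.1 hcd
  refine lt_of_lt_of_le hac ?_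
  have hX : ∀ n, IsPMF (push (φ n) (PV n)) := fun n => push_pmf (φ n) (hPV n)
  refine le_trans ?_ (le_iSup (fun PX : {PX : (n : ℕ) → Word 𝒳 n → ℝ // ∀ n, IsPMF (PX n)} =>
    Ilow PX.1 W) ⟨fun n => push (φ n) (PV n), hX⟩)
  refine le_sSup ?_
  simp only [Set.mem_setOf_eq] at hβ ⊢
  have hexp : Tendsto (fun n : ℕ => Real.exp (-((n : ℝ) * (d - c)))) atTop (nhds 0) := by
    refine Real.tendsto_exp_neg_atTop_nhds_zero.comp ?_
    exact tendsto_natCast_atTop_atTop.atTop_mul_const (sub_pos.2 hcd')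
  have hsum := (hβ.add hε).add hexp
  rw [add_zero, add_zero] at hsum
  refine squeeze_zero' (Eventually.of_forall fun n =>
    prob_nonneg (joint_pmf (hX n) (hW n)).1 _) ?_ hsum
  filter_upwards [eventually_gt_atTop 0] with n hn
  have h := one_shot (hPV n) (hW n) (φ n) (ψ n) n (by exact_mod_cast hn) c d
  simp only [EReal.coe_lt_coe_iff]
  refine le_trans h ?_
  have hm : prob (PV n) {v | (1 / (n : ℝ)) * Real.log (1 / PV n v) < d} ≤
      prob (PV n) {v | (((1 / (n : ℝ)) * Real.log (1 / PV n v) : ℝ) : EReal) < β} :=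
    prob_mono (hPV n) fun v hv => lt_trans (EReal.coe_lt_coe_iff.2 hv) hdβ
  unfold errProb
  gcongr

end ISC
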